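/- (Local to global structure) Let X and Y be independent finitely supported random variables on G = 𝔽₂ⁿ, and suppose we are given couplings (X, U) and (Y, W), where the pair (X, U) is independent of the pair (Y, W). For u ∈ supp U and w ∈ supp W, set X_u = (X | U = u) and Y_w = (Y | W = w). Suppose that for every such u, w we are given a subspace V(u, w) ⊆ G such that 𝔼_{u∼U, w∼W} s[X_u | π_{V(u,w)}(X_u); Y_w | π_{V(u,w)}(Y_w)] ≥ ζ (H[X] + H[Y]) for some ζ > 0. Then there exists a subspace V̄ ⊆ G with H[𝐔_{V̄}] ≤ (8/ζ²) 𝔼_{u∼U, w∼W} H[𝐔_{V(u,w)}] and H[Y | π_{V̄}(Y)] ≥ (ζ/4)(H[X] + H[Y]). -/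

import Mathlib

open Real Pointwise

noncomputable section

abbrev Fvec (n : ℕ) : Type := Fin n → ZMod 2

/-- Shannon entropy (natural log) of a finitely supported distribution. -/
def ent {A : Type*} (p : A → ℝ) : ℝ := ∑ᶠ a, Real.negMulLog (p a)

/-- `p` is a (finitely supported) probability distribution. -/
def IsDist {A : Type*} (p : A → ℝ) : Prop := (∀ a, 0 ≤ p a) ∧ ∑ᶠ a, p a = 1

/-- Pushforward of a distribution along a map: the distribution of `f(X)` for `X ∼ p`. -/
def push {A B : Type*} (f : A → B) (p : A → ℝ) : B → ℝ := fun b => ∑ᶠ a ∈ f ⁻¹' {b}, p a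

/-- Joint distribution of a pair of independent random variables. -/
def prodDist {A B : Type*} (p : A → ℝ) (q : B → ℝ) : A × B → ℝ := fun z => p z.1 * q z.2

/-- Distribution of `X + Y` for independent `X ∼ p`, `Y ∼ q`. -/
def conv {A : Type*} [AddGroup A] (p q : A → ℝ) : A → ℝ := fun z => ∑ᶠ x, p x * q (z - x)

/-- The distribution of `X` conditioned on `U = b`, where `r` is the joint distribution of `(X, U)`. -/
def fiber {A B : Type*} (r : A × B → ℝ) (b : B) : A → ℝ := fun a => r (a, b) / push Prod.snd r b

/-- Conditional entropy `H[X | U]` of a joint distribution `r` of `(X, U)`. -/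
def condEnt {A B : Type*} (r : A × B → ℝ) : ℝ := ∑ᶠ b, push Prod.snd r b * ent (fiber r b)

/-- Doubling mass `s[X ; Y]` (of independent copies with distributions `p`, `q`). -/
def sDouble {A : Type*} [AddGroup A] (p q : A → ℝ) : ℝ := ent p + ent q - ent (conv p q)

/-- Conditional doubling mass `s[X | U ; Y | W] = 𝔼_{u ∼ U, w ∼ W} s[X_u ; Y_w]`,
where `r1`, `r2` are the joint distributions of `(X, U)` and `(Y, W)`. -/
def sCond {A U W : Type*} [AddGroup A] (r1 : A × U → ℝ) (r2 : A × W → ℝ) : ℝ :=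
  ∑ᶠ u, ∑ᶠ w, push Prod.snd r1 u * push Prod.snd r2 w * sDouble (fiber r1 u) (fiber r2 w)

/-- Conditional mutual information `I[A : B | S]` of a joint distribution of `(A, B, S)`. -/
def condMI {A B S : Type*} (r : A × B × S → ℝ) : ℝ :=
  ent (push (fun z => (z.1, z.2.2)) r) + ent (push (fun z => z.2) r)
    - ent r - ent (push (fun z => z.2.2) r)

/-- Uniform distribution on a set. -/
def unifOn {A : Type*} (s : Set A) : A → ℝ := s.indicator fun _ => (Nat.card s : ℝ)⁻¹

/-- Entropic Ruzsa distance `d[X ; Y]`. -/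
def dRuzsa {A : Type*} [AddGroup A] (p q : A → ℝ) : ℝ := ent (conv p q) - ent p / 2 - ent q / 2

/-- Joint distribution of `(X, X + Y)` for independent `X ∼ p`, `Y ∼ q`. -/
def jointSum {A : Type*} [AddGroup A] (p q : A → ℝ) : A × A → ℝ :=
  push (fun z : A × A => (z.1, z.1 + z.2)) (prodDist p q)

/-- Joint distribution of `(X, π_V(X))`. -/
def selfProj {n : ℕ} (V : Submodule (ZMod 2) (Fvec n)) (p : Fvec n → ℝ) :
    Fvec n × (Fvec n ⧸ V) → ℝ := push (fun x => (x, V.mkQ x)) p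

/-- Joint distribution of independent `(X₁, X₂, Y₁, Y₂)` with `X₁, X₂ ∼ p` and `Y₁, Y₂ ∼ q`. -/
def quad {A : Type*} (p q : A → ℝ) : A × A × A × A → ℝ :=
  fun z => p z.1 * p z.2.1 * q z.2.2.1 * q z.2.2.2

/-- Distribution of `X₁ + ⋯ + X_k` for independent `Xᵢ ∼ p i`. -/
def indepSum {A : Type*} [AddCommGroup A] (k : ℕ) (p : Fin k → A → ℝ) : A → ℝ :=
  push (fun x : Fin k → A => ∑ i, x i) (fun x => ∏ i, p i (x i))

/-- Statement `A(η, L, c)` from the paper. -/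
def StA (η L c : ℝ) : Prop :=
  ∀ (n : ℕ) (p q : Fvec n → ℝ), IsDist p → IsDist q →
    ent (conv p q) ≤ (1 - η) * (ent p + ent q) →
    ∃ V : Submodule (ZMod 2) (Fvec n),
      ent (unifOn (V : Set (Fvec n))) ≤ L * (ent p + ent q) ∧
      ent (push V.mkQ p) + ent (push V.mkQ q) ≤ (1 - c) * (ent p + ent q)

/-- Statement `B(η, ε, L)` from the paper. -/
def StB (η ε L : ℝ) : Prop :=
  ∀ (n : ℕ) (p q : Fvec n → ℝ), IsDist p → IsDist q →
    ∃ V : Submodule (ZMod 2) (Fvec n),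
      ent (unifOn (V : Set (Fvec n))) ≤ L * (ent p + ent q) ∧
      ent (conv (push V.mkQ p) (push V.mkQ q)) ≥
        (1 - η) * (ent (push V.mkQ p) + ent (push V.mkQ q)) - ε * (ent p + ent q)


open Classical in
theorem push_eq {A B : Type*} (f : A → B) (p : A → ℝ) (S : Finset A)
    (hS : Function.support p ⊆ S) (b : B) :
    push f p b = ∑ a ∈ S, if f a = b then p a else 0 := by
  unfold push
  rw [← Finset.sum_filter]
  apply finsum_mem_eq_sum_of_inter_support_eq
  ext a
  simp only [Set.mem_inter_iff, Set.mem_preimage, Set.mem_singleton_iff, Finset.coe_filter,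
    Set.mem_ofPred_eq]
  constructor
  · rintro ⟨h1, h2⟩
    exact ⟨⟨hS h2, h1⟩, h2⟩
  · rintro ⟨⟨_, h1⟩, h2⟩
    exact ⟨h1, h2⟩

theorem IsDist.fin {A : Type*} {p : A → ℝ} (h : IsDist p) : (Function.support p).Finite := by
  by_contra hc
  have h2 := h.2
  rw [finsum_of_infinite_support hc] at h2
  exact zero_ne_one h2

theorem push_nonneg {A B : Type*} (f : A → B) {p : A → ℝ} (h0 : ∀ a, 0 ≤ p a) (b : B) :
    0 ≤ push f p b := by
  unfold push
  exact finsum_nonneg fun a => finsum_nonneg fun _ => h0 a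

open Classical in
theorem push_supp {A B : Type*} (f : A → B) (p : A → ℝ) (S : Finset A)
    (hS : Function.support p ⊆ S) : Function.support (push f p) ⊆ (S.image f : Finset B) := by
  intro b hb
  by_contra hc
  apply hb
  rw [push_eq f p S hS]
  apply Finset.sum_eq_zero
  intro a ha
  rw [if_neg]
  rintro rfl
  exact hc (by simpa using ⟨a, ha, rfl⟩)

theorem push_fin {A B : Type*} (f : A → B) (p : A → ℝ) (hf : (Function.support p).Finite) :
    (Function.support (push f p)).Finite := by
  classical
  exact (Finset.finite_toSet _).subset (push_supp f p hf.toFinset (by simp))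

/-- Expectation of a function under a pushforward. -/
theorem sum_push {A B : Type*} (f : A → B) (p : A → ℝ) (S : Finset A)
    (hS : Function.support p ⊆ S) (F : B → ℝ) :
    ∑ᶠ b, push f p b * F b = ∑ a ∈ S, p a * F (f a) := by
  classical
  rw [finsum_eq_sum_of_support_subset (s := S.image f)]
  · simp_rw [push_eq f p S hS, Finset.sum_mul]
    rw [Finset.sum_comm]
    apply Finset.sum_congr rfl
    intro a ha
    rw [Finset.sum_eq_single (f a)]
    · simp
    · intro b _ hb
      rw [if_neg (Ne.symm hb), zero_mul]
    · intro h
      exact absurd (Finset.mem_image_of_mem f ha) h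
  · intro b hb
    apply push_supp f p S hS
    intro h
    apply hb
    simp [h]

theorem IsDist.push' {A B : Type*} (f : A → B) {p : A → ℝ} (h : IsDist p) :
    IsDist (push f p) := by
  refine ⟨push_nonneg f h.1, ?_⟩
  have := sum_push f p h.fin.toFinset (by simp) (fun _ => 1)
  simp only [mul_one] at this
  rw [this, ← h.2]
  symm
  apply finsum_eq_sum_of_support_subset
  simp

theorem ent_push {A B : Type*} (f : A → B) (p : A → ℝ) (S : Finset A)
    (hS : Function.support p ⊆ S) :
    ent (push f p) = ∑ a ∈ S, p a * (- Real.log (push f p (f a))) := by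
  rw [← sum_push f p S hS (fun b => - Real.log (push f p b))]
  unfold ent
  apply finsum_congr
  intro b
  simp [Real.negMulLog]

theorem push_id {A : Type*} (p : A → ℝ) : push (fun a => a) p = p := by
  funext b
  unfold push
  simp

theorem push_push {A B C : Type*} (f : A → B) (g : B → C) (p : A → ℝ)
    (hf : (Function.support p).Finite) : push g (push f p) = push (fun a => g (f a)) p := by
  classical
  funext c
  have hS : Function.support p ⊆ hf.toFinset := by simp
  rw [push_eq (fun a => g (f a)) p _ hS]
  have := sum_push f p _ hS (fun b => if g b = c then 1 else 0)
  simp only [mul_ite, mul_one, mul_zero] at this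
  rw [← this]
  unfold push
  apply finsum_congr
  intro b
  rw [finsum_eq_if]
  simp

theorem push_ge {A B : Type*} (f : A → B) {p : A → ℝ} (h0 : ∀ a, 0 ≤ p a)
    (hf : (Function.support p).Finite) (a : A) : p a ≤ push f p (f a) := by
  classical
  have hS : Function.support p ⊆ hf.toFinset := by simp
  rw [push_eq f p _ hS]
  by_cases ha : p a = 0
  · rw [ha]
    exact Finset.sum_nonneg fun i _ => by split_ifs <;> simp [h0]
  · have : a ∈ hf.toFinset := by simpa using ha
    calc p a = if f a = f a then p a else 0 := by simp
      _ ≤ _ := Finset.single_le_sum (f := fun i => if f i = f a then p i else 0)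
          (fun i _ => by split_ifs <;> simp [h0]) this

/-- Submodularity of entropy. -/
theorem submod {A B C D E : Type*} {p : A → ℝ} (h0 : ∀ a, 0 ≤ p a)
    (hf : (Function.support p).Finite) (f : A → B) (g : A → C) (j : A → D) (k : A → E)
    (hfk : ∀ a b, f a = f b → k a = k b) (hgk : ∀ a b, g a = g b → k a = k b)
    (hj : ∀ a b, f a = f b → g a = g b → j a = j b) :
    ent (push j p) + ent (push k p) ≤ ent (push f p) + ent (push g p) := by
  classical
  set S := hf.toFinset with hSd
  have hS : Function.support p ⊆ S := by simp [hSd]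
  have hpos : ∀ a ∈ S, 0 < p a := fun a ha =>
    lt_of_le_of_ne (h0 a) (Ne.symm (by simpa [hSd] using ha))
  rw [ent_push f p S hS, ent_push g p S hS, ent_push j p S hS, ent_push k p S hS]
  have key : ∑ a ∈ S, p a * ((push f p (f a) * push g p (g a)) /
      (push j p (j a) * push k p (k a))) ≤ ∑ a ∈ S, p a := by
    have e1 : ∀ a ∈ S, p a * ((push f p (f a) * push g p (g a)) /
      (push j p (j a) * push k p (k a))) =
      ∑ b ∈ S, ∑ c ∈ S, (if f b = f a ∧ g c = g a then
        p a * p b * p c / (push j p (j a) * push k p (k a)) else 0) := by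
      intro a _
      rw [push_eq f p S hS (f a), push_eq g p S hS (g a), Finset.sum_mul_sum, Finset.sum_div,
        Finset.mul_sum]
      apply Finset.sum_congr rfl
      intro b _
      rw [Finset.sum_div, Finset.mul_sum]
      apply Finset.sum_congr rfl
      intro c _
      by_cases hb : f b = f a <;> by_cases hc : g c = g a <;> simp [hb, hc]
      ring
    rw [Finset.sum_congr rfl e1, Finset.sum_comm]
    apply Finset.sum_le_sum
    intro b hb
    rw [Finset.sum_comm]
    have hkpos : 0 < push k p (k b) := lt_of_lt_of_le (hpos b hb) (push_ge k h0 hf b)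
    have e2 : ∀ c ∈ S, ∑ a ∈ S, (if f b = f a ∧ g c = g a then
        p a * p b * p c / (push j p (j a) * push k p (k a)) else 0) ≤
        p b * ((if k c = k b then p c else 0) / push k p (k b)) := by
      intro c hc
      by_cases hex : ∃ a0 ∈ S, f b = f a0 ∧ g c = g a0
      · obtain ⟨a0, ha0, h1, h2⟩ := hex
        have hkb : k b = k a0 := hfk _ _ h1
        have hkc : k c = k a0 := hgk _ _ h2
        have hjpos : 0 < push j p (j a0) := lt_of_lt_of_le (hpos a0 ha0) (push_ge j h0 hf a0)
        rw [if_pos (hkc.trans hkb.symm)]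
        calc _ ≤ ∑ a ∈ S, (if j a = j a0 then p a else 0) *
                (p b * p c / (push j p (j a0) * push k p (k b))) := by
              apply Finset.sum_le_sum
              intro a _
              by_cases h : f b = f a ∧ g c = g a
              · have hja : j a = j a0 := hj _ _ (h.1.symm.trans h1) (h.2.symm.trans h2)
                have hka : k a = k b := (hfk _ _ h.1).symm
                rw [if_pos h, if_pos hja, hja, hka]
                apply le_of_eq
                ring
              · rw [if_neg h]
                apply mul_nonneg
                · split_ifs <;> simp [h0]
                · have := h0 b
                  have := h0 c
                  positivity
          _ = p b * (p c / push k p (k b)) := by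
              rw [← Finset.sum_mul, ← push_eq j p S hS]
              field_simp
      · rw [Finset.sum_eq_zero]
        · apply mul_nonneg (h0 b)
          apply div_nonneg _ hkpos.le
          split_ifs <;> simp [h0]
        · intro a ha
          rw [if_neg]
          intro h
          exact hex ⟨a, ha, h⟩
    refine (Finset.sum_le_sum e2).trans ?_
    rw [← Finset.mul_sum, ← Finset.sum_div, ← push_eq k p S hS, div_self hkpos.ne', mul_one]
  have e3 : ∀ a ∈ S, p a * (- Real.log (push j p (j a))) + p a * (- Real.log (push k p (k a)))
      - p a * (- Real.log (push f p (f a))) - p a * (- Real.log (push g p (g a))) ≤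
      p a * ((push f p (f a) * push g p (g a)) / (push j p (j a) * push k p (k a))) - p a := by
    intro a ha
    have hp := hpos a ha
    have hF : 0 < push f p (f a) := lt_of_lt_of_le hp (push_ge f h0 hf a)
    have hG : 0 < push g p (g a) := lt_of_lt_of_le hp (push_ge g h0 hf a)
    have hJ : 0 < push j p (j a) := lt_of_lt_of_le hp (push_ge j h0 hf a)
    have hK : 0 < push k p (k a) := lt_of_lt_of_le hp (push_ge k h0 hf a)
    have hl := Real.log_le_sub_one_of_pos
      (x := (push f p (f a) * push g p (g a)) / (push j p (j a) * push k p (k a))) (by positivity)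
    rw [Real.log_div (by positivity) (by positivity), Real.log_mul hF.ne' hG.ne',
      Real.log_mul hJ.ne' hK.ne'] at hl
    have := mul_le_mul_of_nonneg_left hl hp.le
    linarith
  have := Finset.sum_le_sum e3
  simp only [Finset.sum_add_distrib, Finset.sum_sub_distrib] at this
  linarith

theorem ent_push_congr {A B C : Type*} {p : A → ℝ}
    (hf : (Function.support p).Finite) (f : A → B) (g : A → C)
    (h : ∀ a b, f a = f b ↔ g a = g b) : ent (push f p) = ent (push g p) := by
  classical
  have hS : Function.support p ⊆ hf.toFinset := by simp
  rw [ent_push f p _ hS, ent_push g p _ hS]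
  apply Finset.sum_congr rfl
  intro a _
  rw [push_eq f p _ hS, push_eq g p _ hS]
  simp only [h]

theorem ent_push_inj {A B : Type*} {p : A → ℝ}
    (hf : (Function.support p).Finite) (f : A → B)
    (h : Function.Injective f) : ent (push f p) = ent p := by
  rw [ent_push_congr hf f (fun a => a) (fun a b => h.eq_iff), push_id]

theorem IsDist.le_one {A : Type*} {p : A → ℝ} (h : IsDist p) (a : A) : p a ≤ 1 := by
  have h2 := h.2
  rw [finsum_eq_sum_of_support_subset (s := h.fin.toFinset) _ (by simp)] at h2
  by_cases ha : p a = 0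
  · rw [ha]; exact zero_le_one
  · rw [← h2]
    exact Finset.single_le_sum (f := p) (fun i _ => h.1 i) (by simpa using ha)

theorem ent_nonneg {A : Type*} {p : A → ℝ} (h : IsDist p) : 0 ≤ ent p :=
  finsum_nonneg fun a => Real.negMulLog_nonneg (h.1 a) (h.le_one a)

/-- Chain rule. -/
theorem condEnt_eq {A B : Type*} {r : A × B → ℝ} (h0 : ∀ a, 0 ≤ r a)
    (hf : (Function.support r).Finite) : condEnt r = ent r - ent (push Prod.snd r) := by
  classical
  set S := hf.toFinset with hSd
  have hS : Function.support r ⊆ S := by simp [hSd]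
  set SA := S.image Prod.fst with hSA
  set SB := S.image Prod.snd with hSB
  have hPr : Function.support r ⊆ (SA ×ˢ SB : Finset (A × B)) := by
    intro z hz
    have := hS hz
    simp only [Finset.coe_product, Set.mem_prod, Finset.mem_coe, hSA, hSB]
    exact ⟨Finset.mem_image_of_mem _ this, Finset.mem_image_of_mem _ this⟩
  have hP : Function.support (push Prod.snd r) ⊆ SB := push_supp _ _ _ hS
  have e1 : ent r = ∑ b ∈ SB, ∑ a ∈ SA, r (a, b) * (- Real.log (r (a, b))) := by
    unfold ent
    rw [finsum_eq_sum_of_support_subset (s := SA ×ˢ SB), Finset.sum_product_right]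
    · simp [Real.negMulLog]
    · intro z hz
      apply hPr
      intro h
      apply hz
      simp [h]
  have e2 : ent (push Prod.snd r) =
      ∑ b ∈ SB, ∑ a ∈ SA, r (a, b) * (- Real.log (push Prod.snd r b)) := by
    rw [ent_push _ _ _ hPr, Finset.sum_product_right]
  rw [e1, e2, ← Finset.sum_sub_distrib]
  unfold condEnt
  rw [finsum_eq_sum_of_support_subset (s := SB)]
  · apply Finset.sum_congr rfl
    intro b _
    rw [← Finset.sum_sub_distrib]
    unfold ent
    rw [finsum_eq_sum_of_support_subset (s := SA), Finset.mul_sum]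
    · apply Finset.sum_congr rfl
      intro a _
      unfold fiber Real.negMulLog
      by_cases hr : r (a, b) = 0
      · simp [hr]
      · have hp : 0 < r (a, b) := lt_of_le_of_ne (h0 _) (Ne.symm hr)
        have hq : 0 < push Prod.snd r b := lt_of_lt_of_le hp (push_ge Prod.snd h0 hf (a, b))
        rw [Real.log_div hr hq.ne']
        field_simp
        ring
    · intro a ha
      have : (a, b) ∈ (SA ×ˢ SB : Finset (A × B)) := by
        apply hPr
        intro h
        apply ha
        simp [fiber, h]
      simpa using (Finset.mem_product.1 this).1
  · intro b hb
    apply hP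
    intro h
    apply hb
    simp [h]

theorem fiber_dist {A B : Type*} {r : A × B → ℝ} (h0 : ∀ a, 0 ≤ r a)
    (hf : (Function.support r).Finite) (b : B) (hb : push Prod.snd r b ≠ 0) :
    IsDist (fiber r b) := by
  classical
  refine ⟨fun a => div_nonneg (h0 _) (push_nonneg _ h0 _), ?_⟩
  unfold fiber
  simp only [div_eq_mul_inv]
  rw [← finsum_mul']
  · suffices ∑ᶠ a, r (a, b) = push Prod.snd r b by rw [this, mul_inv_cancel₀ hb]
    have e : Prod.snd ⁻¹' {b} = Set.range (fun a : A => (a, b)) := by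
      ext ⟨x, y⟩
      simp [eq_comm]
    unfold push
    rw [e, finsum_mem_range (fun x y h => (Prod.mk.inj h).1)]
  · have := hf.preimage (f := fun a : A => (a, b)) (fun x _ y _ h => (Prod.mk.inj h).1)
    exact this

/-- Conditioning on `W` lowers the conditional entropy given `π`. -/
theorem cond_concave {A B W : Type*} [Finite A] {r : A × W → ℝ} (h : IsDist r) (f : A → B) :
    ∑ᶠ w, push Prod.snd r w * (ent (fiber r w) - ent (push f (fiber r w))) ≤
      ent (push Prod.fst r) - ent (push f (push Prod.fst r)) := by
  classical
  have hPf := push_fin Prod.snd r h.fin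
  set r' : B × W → ℝ := push (fun z => (f z.1, z.2)) r with hr'
  have hd' : IsDist r' := h.push' _
  have e1 : push Prod.snd r' = push Prod.snd r := push_push _ _ _ h.fin
  have e2 : ∀ w, fiber r' w = push f (fiber r w) := by
    intro w
    funext b
    unfold fiber
    rw [e1, hr']
    unfold push
    simp only [div_eq_mul_inv]
    have inj : Function.Injective (fun a : A => (a, w)) := fun x y h => (Prod.mk.inj h).1
    have e : (fun z : A × W => (f z.1, z.2)) ⁻¹' {(b, w)} =
        (fun a : A => (a, w)) '' (f ⁻¹' {b}) := by
      ext ⟨x, y⟩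
      simp [eq_comm]
    rw [e, finsum_mem_image inj.injOn, finsum_mem_mul']
    exact Set.toFinite _
  have c1 := condEnt_eq h.1 h.fin
  have c2 := condEnt_eq hd'.1 hd'.fin
  have e3 : ∑ᶠ w, push Prod.snd r w * (ent (fiber r w) - ent (push f (fiber r w))) =
      condEnt r - condEnt r' := by
    unfold condEnt
    rw [e1]
    simp_rw [e2, mul_sub]
    rw [finsum_sub_distrib]
    · exact hPf.subset (fun w hw hc => hw (by simp [hc]))
    · exact hPf.subset (fun w hw hc => hw (by simp [hc]))
  rw [e3, c1, c2, e1, push_push _ _ _ h.fin]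
  have := submod h.1 h.fin (fun z => z.1) (fun z => (f z.1, z.2)) (fun z => z)
    (fun z => f z.1) (by intro a b h; simp [h]) (by intro a b h; simp at h; exact h.1)
    (by intro a b h h2; simp at h2; exact Prod.ext h h2.2)
  rw [push_id] at this
  change ent r + _ ≤ ent (push Prod.fst r) + ent r' at this
  linarith

theorem prodDist_dist {A B : Type*} [Finite A] [Finite B] {p : A → ℝ} {q : B → ℝ}
    (hp : IsDist p) (hq : IsDist q) : IsDist (prodDist p q) := by
  have := Fintype.ofFinite A
  have := Fintype.ofFinite B
  refine ⟨fun z => mul_nonneg (hp.1 _) (hq.1 _), ?_⟩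
  have h1 := hp.2
  have h2 := hq.2
  rw [finsum_eq_sum_of_fintype] at *
  unfold prodDist
  rw [Fintype.sum_prod_type, ← Finset.sum_mul_sum, h1, h2, one_mul]

theorem ent_prodDist {A B : Type*} [Finite A] [Finite B] {p : A → ℝ} {q : B → ℝ}
    (hp : IsDist p) (hq : IsDist q) : ent (prodDist p q) = ent p + ent q := by
  have := Fintype.ofFinite A
  have := Fintype.ofFinite B
  have h1 := hp.2
  have h2 := hq.2
  unfold ent
  rw [finsum_eq_sum_of_fintype] at *
  rw [finsum_eq_sum_of_fintype, finsum_eq_sum_of_fintype]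
  unfold prodDist
  simp only [Real.negMulLog_mul]
  rw [Fintype.sum_prod_type]
  simp only [Finset.sum_add_distrib, ← Finset.sum_mul, ← Finset.mul_sum, h1, h2, one_mul]

theorem condEnt_graph {A B : Type*} {p : A → ℝ} (hp : IsDist p) (f : A → B) :
    condEnt (push (fun x => (x, f x)) p) = ent p - ent (push f p) := by
  have hd : IsDist (push (fun x => (x, f x)) p) := hp.push' _
  rw [condEnt_eq hd.1 hd.fin, push_push _ _ _ hp.fin,
    ent_push_inj hp.fin _ (fun x y h => (Prod.mk.inj h).1)]

open Classical in
theorem push_graph {A B : Type*} [Fintype A] (p : A → ℝ) (f : A → B) (x : A) (c : B) :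
    push (fun x => (x, f x)) p (x, c) = if f x = c then p x else 0 := by
  rw [push_eq _ p Finset.univ (by simp)]
  rw [Finset.sum_eq_single x]
  · simp
  · intro b _ hb
    simp [hb]
  · simp

/-- Formula for the conditional doubling mass. -/
theorem sCond_eq {A B : Type*} [AddCommGroup A] [Finite A] [Finite B] {p q : A → ℝ}
    (hp : IsDist p) (hq : IsDist q) (f : A → B) :
    sCond (push (fun x => (x, f x)) p) (push (fun x => (x, f x)) q) =
      ent p + ent q - ent (push (fun z : A × A => (z.1 + z.2, (f z.1, f z.2))) (prodDist p q)) := by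
  classical
  have := Fintype.ofFinite A
  have := Fintype.ofFinite B
  have hpq := prodDist_dist hp hq
  have hp' : IsDist (push f p) := hp.push' f
  have hq' : IsDist (push f q) := hq.push' f
  set R := push (fun z : A × A => (z.1 + z.2, (f z.1, f z.2))) (prodDist p q) with hR
  have hRd : IsDist R := hpq.push' _
  have s1 : push Prod.snd (push (fun x => (x, f x)) p) = push f p := push_push _ _ _ hp.fin
  have s2 : push Prod.snd (push (fun x => (x, f x)) q) = push f q := push_push _ _ _ hq.fin
  have e1 : push Prod.snd R = prodDist (push f p) (push f q) := by
    rw [hR, push_push _ _ _ hpq.fin]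
    funext ⟨c, d⟩
    unfold prodDist
    rw [push_eq _ _ Finset.univ (by simp), push_eq _ p Finset.univ (by simp),
      push_eq _ q Finset.univ (by simp), Finset.sum_mul_sum, Fintype.sum_prod_type]
    apply Finset.sum_congr rfl
    intro x _
    apply Finset.sum_congr rfl
    intro y _
    by_cases h1 : f x = c <;> by_cases h2 : f y = d <;> simp [h1, h2]
  have e2 : ∀ c d, fiber R (c, d) = conv (fiber (push (fun x => (x, f x)) p) c)
      (fiber (push (fun x => (x, f x)) q) d) := by
    intro c d
    funext z
    unfold conv fiber
    rw [e1, s1, s2, finsum_eq_sum_of_fintype]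
    simp only [push_graph]
    simp only [prodDist, hR]
    rw [push_eq _ _ Finset.univ (by simp), Fintype.sum_prod_type, Finset.sum_div]
    apply Finset.sum_congr rfl
    intro x _
    rw [Finset.sum_eq_single (z - x)]
    · by_cases h1 : f x = c <;> by_cases h2 : f (z - x) = d <;> simp [h1, h2]
      rw [div_mul_div_comm]
      rfl
    · intro y _ hy
      rw [if_neg]
      intro h
      apply hy
      simp only [Prod.mk.injEq] at h
      rw [← h.1]
      abel
    · simp
  have c1 := condEnt_graph hp f
  have c2 := condEnt_graph hq f
  have c3 := condEnt_eq hRd.1 hRd.fin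
  rw [e1, ent_prodDist hp' hq'] at c3
  have h1 := hp'.2
  have h2 := hq'.2
  unfold condEnt at c1 c2 c3
  rw [s1] at c1
  rw [s2] at c2
  rw [e1] at c3
  unfold sCond sDouble
  rw [s1, s2]
  simp only [finsum_eq_sum_of_fintype] at *
  rw [Fintype.sum_prod_type] at c3
  simp only [e2, prodDist] at c3
  simp only [mul_sub, mul_add, Finset.sum_sub_distrib, Finset.sum_add_distrib]
  rw [c3]
  have t1 : ∑ c, ∑ d, push f p c * push f q d * ent (fiber (push (fun x => (x, f x)) p) c) =
      ent p - ent (push f p) := by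
    rw [← c1]
    apply Finset.sum_congr rfl
    intro c _
    rw [← Finset.sum_mul, ← Finset.mul_sum, h2, mul_one]
  have t2 : ∑ c, ∑ d, push f p c * push f q d * ent (fiber (push (fun x => (x, f x)) q) d) =
      ent q - ent (push f q) := by
    rw [← c2]
    simp only [mul_assoc, ← Finset.mul_sum]
    rw [← Finset.sum_mul, h1, one_mul]
  rw [t1, t2]
  ring

/-- The key inequality. -/
theorem core {n : ℕ} {p q : Fvec n → ℝ} (hp : IsDist p) (hq : IsDist q)
    (V T : Submodule (ZMod 2) (Fvec n)) :
    sCond (push (fun x => (x, V.mkQ x)) p) (push (fun y => (y, V.mkQ y)) q) ≤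
      (ent q - ent (push T.mkQ q)) + (ent (push T.mkQ p) - ent (push (T ⊔ V).mkQ p)) := by
  rw [sCond_eq hp hq]
  have hpq := prodDist_dist hp hq
  have m : ∀ (L : Submodule (ZMod 2) (Fvec n)) (x y : Fvec n), L.mkQ x = L.mkQ y ↔ x - y ∈ L :=
    fun L x y => Submodule.Quotient.eq L
  have hfst : push (fun z : Fvec n × Fvec n => z.1) (prodDist p q) = p := by
    funext x
    classical
    rw [push_eq _ _ Finset.univ (by simp), Fintype.sum_prod_type, Finset.sum_eq_single x]
    · have := hq.2
      rw [finsum_eq_sum_of_fintype] at this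
      simp [prodDist, ← Finset.mul_sum, this]
    · intro b _ hb
      simp [hb]
    · simp
  have hsnd : push (fun z : Fvec n × Fvec n => z.2) (prodDist p q) = q := by
    funext x
    classical
    rw [push_eq _ _ Finset.univ (by simp), Fintype.sum_prod_type_right, Finset.sum_eq_single x]
    · have := hp.2
      rw [finsum_eq_sum_of_fintype] at this
      simp [prodDist, ← Finset.sum_mul, this]
    · intro b _ hb
      simp [hb]
    · simp
  have i1 := submod hpq.1 hpq.fin (fun z => z.2)
    (fun z => ((z.1 + z.2, V.mkQ z.1), T.mkQ z.2)) (fun z => z) (fun z => T.mkQ z.2)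
    (by intro a b h; simp only [h]) (by intro a b h; exact (Prod.mk.inj h).2)
    (by
      intro a b h h'
      have h3 : a.1 + a.2 = b.1 + b.2 := (Prod.mk.inj (Prod.mk.inj h').1).1
      change a.2 = b.2 at h
      rw [h] at h3
      exact Prod.ext (add_right_cancel h3) h)
  have i2 := submod hpq.1 hpq.fin (fun z => (z.1 + z.2, (V.mkQ z.1, V.mkQ z.2)))
    (fun z => T.mkQ z.1) (fun z => ((z.1 + z.2, V.mkQ z.1), T.mkQ z.2)) (fun z => (T ⊔ V).mkQ z.1)
    (by
      intro a b h
      simp only [Prod.mk.injEq, m] at h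
      rw [m]
      exact Submodule.mem_sup_right h.2.1)
    (by
      intro a b h
      simp only [m] at h ⊢
      exact Submodule.mem_sup_left h)
    (by
      intro a b h h'
      simp only [Prod.mk.injEq, m] at h h' ⊢
      refine ⟨⟨h.1, h.2.1⟩, ?_⟩
      have e : a.2 - b.2 = -(a.1 - b.1) := by
        have := h.1
        rw [eq_neg_iff_add_eq_zero]
        calc _ = (a.1 + a.2) - (b.1 + b.2) := by abel
          _ = 0 := by rw [this, sub_self]
      rw [e]
      exact T.neg_mem h')
  rw [push_id, ent_prodDist hp hq, hsnd, ← push_push (fun z => z.2) T.mkQ _ hpq.fin, hsnd] at i1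
  rw [← push_push (fun z => z.1) T.mkQ _ hpq.fin, ← push_push (fun z => z.1) (T ⊔ V).mkQ _ hpq.fin,
    hfst] at i2
  linarith

theorem ent_unif {n : ℕ} (V : Submodule (ZMod 2) (Fvec n)) :
    ent (unifOn (V : Set (Fvec n))) = Real.log (Nat.card V) := by
  classical
  unfold ent unifOn
  have hc : (0 : ℝ) < Nat.card V := by exact_mod_cast Nat.card_pos
  rw [finsum_eq_sum_of_fintype]
  have : ∀ a, Real.negMulLog ((V : Set (Fvec n)).indicator
      (fun _ => (Nat.card (V : Set (Fvec n)) : ℝ)⁻¹) a) =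
      if a ∈ V then (Nat.card V : ℝ)⁻¹ * Real.log (Nat.card V) else 0 := by
    intro a
    by_cases h : a ∈ V
    · rw [Set.indicator_of_mem (by exact h), if_pos h]
      simp [Real.negMulLog]
    · rw [Set.indicator_of_notMem (by exact h), if_neg h]
      simp
  rw [Finset.sum_congr rfl fun a _ => this a, ← Finset.sum_filter, Finset.sum_const, nsmul_eq_mul]
  have e : (Finset.univ.filter (fun a => a ∈ V)).card = Nat.card V := by
    rw [Nat.card_eq_fintype_card, Fintype.card_subtype]
  rw [e, ← mul_assoc, mul_inv_cancel₀ hc.ne', one_mul]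

theorem ent_unif_nonneg {n : ℕ} (V : Submodule (ZMod 2) (Fvec n)) :
    0 ≤ ent (unifOn (V : Set (Fvec n))) := by
  rw [ent_unif]
  exact Real.log_natCast_nonneg _

theorem ent_unif_bot {n : ℕ} :
    ent (unifOn ((⊥ : Submodule (ZMod 2) (Fvec n)) : Set (Fvec n))) = 0 := by
  rw [ent_unif]
  simp

theorem eq_bot_of_ent {n : ℕ} (V : Submodule (ZMod 2) (Fvec n))
    (h : ent (unifOn (V : Set (Fvec n))) = 0) : V = ⊥ := by
  rw [ent_unif] at h
  have hc : 0 < Nat.card V := Nat.card_pos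
  have h1 : Nat.card V = 1 := by
    have := Real.eq_one_of_pos_of_log_eq_zero (by exact_mod_cast hc) h
    exact_mod_cast this
  have := (Nat.card_eq_one_iff_unique.1 h1).1
  exact (Submodule.subsingleton_iff_eq_bot).1 this

theorem ent_unif_sup {n : ℕ} (V T : Submodule (ZMod 2) (Fvec n)) :
    ent (unifOn ((T ⊔ V : Submodule (ZMod 2) (Fvec n)) : Set (Fvec n))) ≤
      ent (unifOn (T : Set (Fvec n))) + ent (unifOn (V : Set (Fvec n))) := by
  rw [ent_unif, ent_unif, ent_unif]
  have h1 : (0 : ℝ) < Nat.card T := by exact_mod_cast Nat.card_pos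
  have h2 : (0 : ℝ) < Nat.card V := by exact_mod_cast Nat.card_pos
  have h3 : (0 : ℝ) < Nat.card (T ⊔ V : Submodule (ZMod 2) (Fvec n)) := by
    exact_mod_cast Nat.card_pos
  rw [← Real.log_mul h1.ne' h2.ne']
  apply Real.log_le_log h3
  rw [← Nat.cast_mul, ← Nat.card_prod]
  norm_cast
  apply Nat.card_le_card_of_surjective
    (fun z : T × V => (⟨z.1.1 + z.2.1, Submodule.add_mem_sup z.1.2 z.2.2⟩ :
      (T ⊔ V : Submodule (ZMod 2) (Fvec n))))
  rintro ⟨x, hx⟩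
  obtain ⟨y, hy, z, hz, rfl⟩ := Submodule.mem_sup.1 hx
  exact ⟨(⟨y, hy⟩, ⟨z, hz⟩), rfl⟩

theorem exists_min {n : ℕ} {p : Fvec n → ℝ} (hp : IsDist p) (l : ℝ) (hl : 0 ≤ l) :
    ∃ T : Submodule (ZMod 2) (Fvec n),
      l * ent (unifOn (T : Set (Fvec n))) ≤ ent p ∧
      ∀ V : Submodule (ZMod 2) (Fvec n), ent (push T.mkQ p) - ent (push (T ⊔ V).mkQ p) ≤
        l * ent (unifOn (V : Set (Fvec n))) := by
  have : Finite (Submodule (ZMod 2) (Fvec n)) :=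
    Finite.of_injective _ (SetLike.coe_injective (A := Submodule (ZMod 2) (Fvec n)))
  obtain ⟨T, hT⟩ := Finite.exists_min (fun T : Submodule (ZMod 2) (Fvec n) =>
    ent (push T.mkQ p) + l * ent (unifOn (T : Set (Fvec n))))
  refine ⟨T, ?_, ?_⟩
  · have h := hT ⊥
    rw [ent_unif_bot, ent_push_inj hp.fin _ (LinearMap.ker_eq_bot.1 (Submodule.ker_mkQ ⊥))] at h
    have := ent_nonneg (hp.push' T.mkQ)
    linarith
  · intro V
    have h := hT (T ⊔ V)
    have h2 := mul_le_mul_of_nonneg_left (ent_unif_sup V T) hl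
    linarith

theorem ent_const {A : Type*} {p : A → ℝ} (hp : IsDist p) :
    ent (push (fun _ => ()) p) = 0 := by
  have h := (hp.push' (fun _ => ())).2
  rw [finsum_eq_sum_of_fintype] at h
  unfold ent
  rw [finsum_eq_sum_of_fintype]
  simp only [Finset.univ_unique, Finset.sum_singleton] at h ⊢
  rw [h]
  simp

/-- **Local to global structure.** -/
theorem statement17 (n : ℕ) {U W : Type*} (r1 : Fvec n × U → ℝ) (r2 : Fvec n × W → ℝ)
    (h1 : IsDist r1) (h2 : IsDist r2) (ζ : ℝ) (hζ : 0 < ζ)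
    (V : U → W → Submodule (ZMod 2) (Fvec n))
    (hV : (∑ᶠ u, ∑ᶠ w, push Prod.snd r1 u * push Prod.snd r2 w *
        sCond (push (fun x => (x, (V u w).mkQ x)) (fiber r1 u))
          (push (fun y => (y, (V u w).mkQ y)) (fiber r2 w))) ≥
      ζ * (ent (push Prod.fst r1) + ent (push Prod.fst r2))) :
    ∃ Vb : Submodule (ZMod 2) (Fvec n),
      ent (unifOn (Vb : Set (Fvec n))) ≤
        8 / ζ ^ 2 *
          ∑ᶠ u, ∑ᶠ w, push Prod.snd r1 u * push Prod.snd r2 w *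
            ent (unifOn ((V u w) : Set (Fvec n))) ∧
      condEnt (selfProj Vb (push Prod.fst r2)) ≥
        ζ / 4 * (ent (push Prod.fst r1) + ent (push Prod.fst r2)) := by
  classical
  have hP1 := h1.push' Prod.snd
  have hP2 := h2.push' Prod.snd
  have hX := h1.push' Prod.fst
  have hY := h2.push' Prod.fst
  set P1 := push Prod.snd r1 with hP1d
  set P2 := push Prod.snd r2 with hP2d
  set SU := hP1.fin.toFinset with hSU
  set SW := hP2.fin.toFinset with hSW
  have conv2 : ∀ F : U → W → ℝ, ∑ᶠ u, ∑ᶠ w, P1 u * P2 w * F u w =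
      ∑ u ∈ SU, P1 u * ∑ w ∈ SW, P2 w * F u w := by
    intro F
    have e : ∀ u, ∑ᶠ w, P1 u * P2 w * F u w = P1 u * ∑ w ∈ SW, P2 w * F u w := by
      intro u
      rw [finsum_eq_sum_of_support_subset (s := SW), Finset.mul_sum]
      · exact Finset.sum_congr rfl fun w _ => mul_assoc _ _ _
      · intro w hw
        simp only [hSW, Set.Finite.coe_toFinset]
        intro h
        apply hw
        simp [h]
    rw [finsum_congr e, finsum_eq_sum_of_support_subset]
    intro u hu
    simp only [hSU, Set.Finite.coe_toFinset]
    intro h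
    apply hu
    simp [h]
  have conv1 : ∀ F : W → ℝ, ∑ᶠ w, P2 w * F w = ∑ w ∈ SW, P2 w * F w := by
    intro F
    apply finsum_eq_sum_of_support_subset
    intro w hw
    simp only [hSW, Set.Finite.coe_toFinset]
    intro h
    apply hw
    simp [h]
  have sum1 : ∑ u ∈ SU, P1 u = 1 := by
    rw [← hP1.2]
    symm
    apply finsum_eq_sum_of_support_subset
    simp [hSU]
  have sum2 : ∑ w ∈ SW, P2 w = 1 := by
    rw [← hP2.2]
    symm
    apply finsum_eq_sum_of_support_subset
    simp [hSW]
  have hdu : ∀ u ∈ SU, IsDist (fiber r1 u) := fun u hu =>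
    fiber_dist h1.1 h1.fin u (by simpa [hSU] using hu)
  have hdw : ∀ w ∈ SW, IsDist (fiber r2 w) := fun w hw =>
    fiber_dist h2.1 h2.fin w (by simpa [hSW] using hw)
  rw [conv2 (fun u w => sCond (push (fun x => (x, (V u w).mkQ x)) (fiber r1 u))
          (push (fun y => (y, (V u w).mkQ y)) (fiber r2 w)))] at hV
  rw [conv2 (fun u w => ent (unifOn ((V u w) : Set (Fvec n))))]
  set f : U → ℝ := fun u => ∑ w ∈ SW, P2 w *
    sCond (push (fun x => (x, (V u w).mkQ x)) (fiber r1 u))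
          (push (fun y => (y, (V u w).mkQ y)) (fiber r2 w)) with hf
  set g : U → ℝ := fun u => ∑ w ∈ SW, P2 w * ent (unifOn ((V u w) : Set (Fvec n))) with hg
  change ∑ u ∈ SU, P1 u * f u ≥ _ at hV
  change ∃ Vb : Submodule (ZMod 2) (Fvec n), _ ≤ 8 / ζ ^ 2 * ∑ u ∈ SU, P1 u * g u ∧ _
  have hgn : ∀ u, 0 ≤ g u := fun u => Finset.sum_nonneg fun w _ =>
    mul_nonneg (hP2.1 w) (ent_unif_nonneg _)
  set x := ent (push Prod.fst r1) with hx
  set y := ent (push Prod.fst r2) with hy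
  have hx0 : 0 ≤ x := ent_nonneg hX
  have hy0 : 0 ≤ y := ent_nonneg hY
  set E := ∑ u ∈ SU, P1 u * g u with hE
  have hE0 : 0 ≤ E := Finset.sum_nonneg fun u _ => mul_nonneg (hP1.1 u) (hgn u)
  have hK : ∀ T : Submodule (ZMod 2) (Fvec n), condEnt (selfProj T (push Prod.fst r2)) =
      y - ent (push T.mkQ (push Prod.fst r2)) := fun T => condEnt_graph hY _
  -- the main bound on `f`
  have hA : ∀ u ∈ SU, ∀ T : Submodule (ZMod 2) (Fvec n), f u ≤
      (y - ent (push T.mkQ (push Prod.fst r2))) +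
      ∑ w ∈ SW, P2 w * (ent (push T.mkQ (fiber r1 u)) - ent (push (T ⊔ V u w).mkQ (fiber r1 u))) := by
    intro u hu T
    have hc := cond_concave h2 T.mkQ
    rw [← hP2d, conv1] at hc
    refine le_trans ?_ (add_le_add_left hc _)
    rw [← Finset.sum_add_distrib]
    apply Finset.sum_le_sum
    intro w hw
    rw [← mul_add]
    exact mul_le_mul_of_nonneg_left (core (hdu u hu) (hdw w hw) (V u w) T) (hP2.1 w)
  have hKbot : ent (push (⊥ : Submodule (ZMod 2) (Fvec n)).mkQ (push Prod.fst r2)) = y :=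
    ent_push_inj hY.fin _ (LinearMap.ker_eq_bot.1 (Submodule.ker_mkQ ⊥))
  have hfy : ∀ u ∈ SU, f u ≤ y := by
    intro u hu
    have := hA u hu ⊤
    have e : ∑ w ∈ SW, P2 w * (ent (push (⊤ : Submodule (ZMod 2) (Fvec n)).mkQ (fiber r1 u)) -
        ent (push (⊤ ⊔ V u w : Submodule (ZMod 2) (Fvec n)).mkQ (fiber r1 u))) = 0 :=
      Finset.sum_eq_zero fun w _ => by rw [top_sup_eq, sub_self, mul_zero]
    rw [e] at this
    have h3 := ent_nonneg (hY.push' (⊤ : Submodule (ZMod 2) (Fvec n)).mkQ)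
    linarith
  have havg : ∀ b : ℝ, (∀ u ∈ SU, f u ≤ b) → ζ * (x + y) ≤ b := by
    intro b hb
    refine le_trans hV ?_
    calc ∑ u ∈ SU, P1 u * f u ≤ ∑ u ∈ SU, P1 u * b :=
          Finset.sum_le_sum fun u hu => mul_le_mul_of_nonneg_left (hb u hu) (hP1.1 u)
      _ = b := by rw [← Finset.sum_mul, sum1, one_mul]
  by_cases hh : x + y ≤ 0
  · refine ⟨⊥, ?_, ?_⟩
    · rw [ent_unif_bot]
      positivity
    · rw [hK, hKbot, sub_self]
      have : x + y = 0 := by linarith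
      rw [this]
      simp
  have hh : 0 < x + y := not_le.1 hh
  have hypos : 0 < y := by
    have := havg y hfy
    have h3 : 0 < ζ * (x + y) := by positivity
    linarith
  have hEpos : 0 < E := by
    rcases hE0.lt_or_eq with h | h
    · exact h
    · exfalso
      have h3 : 0 < ζ * (x + y) := by positivity
      have : ζ * (x + y) ≤ 0 := by
        apply havg
        intro u hu
        have h4 := hA u hu ⊥
        rw [hKbot, sub_self, zero_add] at h4
        refine h4.trans (le_of_eq ?_)
        apply Finset.sum_eq_zero
        intro w hw
        have h5 := (Finset.sum_eq_zero_iff_of_nonneg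
          (fun u _ => mul_nonneg (hP1.1 u) (hgn u))).1 h.symm u hu
        have h6 : g u = 0 := by
          rcases mul_eq_zero.1 h5 with h7 | h7
          · exact absurd h7 (by simpa [hSU] using hu)
          · exact h7
        have h8 := (Finset.sum_eq_zero_iff_of_nonneg
          (fun w _ => mul_nonneg (hP2.1 w) (ent_unif_nonneg (V u w)))).1 h6 w hw
        have h9 : V u w = ⊥ := by
          rcases mul_eq_zero.1 h8 with h7 | h7
          · exact absurd h7 (by simpa [hSW] using hw)
          · exact eq_bot_of_ent _ h7
        rw [h9, sup_idem, sub_self, mul_zero]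
      linarith
  have hξ : ∑ u ∈ SU, P1 u * ent (fiber r1 u) ≤ x := by
    have hc := cond_concave h1 (fun _ => ())
    rw [← hP1d, ent_const hX, sub_zero] at hc
    refine le_trans (le_of_eq ?_) hc
    rw [finsum_eq_sum_of_support_subset (s := SU)]
    · apply Finset.sum_congr rfl
      intro u hu
      rw [ent_const (hdu u hu), sub_zero]
    · intro w hw
      simp only [hSU, Set.Finite.coe_toFinset]
      intro h
      apply hw
      simp [h]
  set l := ζ * (x + y) / (4 * E) with hl
  set a := y * ζ / (2 * (x + y)) with ha
  have hlpos : 0 < l := by positivity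
  have hapos : 0 < a := by positivity
  have hlE : l * E = ζ * (x + y) / 4 := by
    rw [hl]
    field_simp
  have hax : a * x ≤ ζ * (x + y) / 8 := by
    rw [ha, div_mul_eq_mul_div, div_le_div_iff₀ (by positivity) (by norm_num)]
    nlinarith [mul_nonneg hζ.le (sq_nonneg (x - y))]
  obtain ⟨u, hu, hlt⟩ : ∃ u ∈ SU, P1 u * (ζ / 4 * (x + y)) <
      P1 u * (f u - l * g u - a * ent (fiber r1 u)) := by
    apply Finset.exists_lt_of_sum_lt
    rw [← Finset.sum_mul, sum1, one_mul]
    have e : ∑ u ∈ SU, P1 u * (f u - l * g u - a * ent (fiber r1 u)) =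
        ∑ u ∈ SU, P1 u * f u - l * E - a * ∑ u ∈ SU, P1 u * ent (fiber r1 u) := by
      rw [hE, Finset.mul_sum, Finset.mul_sum, ← Finset.sum_sub_distrib, ← Finset.sum_sub_distrib]
      exact Finset.sum_congr rfl fun u _ => by ring
    rw [e, hlE]
    have := mul_le_mul_of_nonneg_left hξ hapos.le
    have h3 : 0 < ζ * (x + y) := by positivity
    linarith
  have hlt := lt_of_mul_lt_mul_left hlt (hP1.1 u)
  have hξ0 := ent_nonneg (hdu u hu)
  obtain ⟨T, hT1, hT2⟩ := exists_min (hdu u hu) l hlpos.le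
  refine ⟨T, ?_, ?_⟩
  · have h3 : 0 < ζ / 4 * (x + y) := by positivity
    have h4 := mul_nonneg hlpos.le (hgn u)
    have h5 := hfy u hu
    have h6 : a * ent (fiber r1 u) ≤ y := by linarith
    have h7 : ent (fiber r1 u) ≤ 2 * (x + y) / ζ := by
      rw [← le_div_iff₀' hapos] at h6
      refine h6.trans (le_of_eq ?_)
      rw [ha]
      field_simp
    have h8 : l * ent (unifOn (T : Set (Fvec n))) ≤ l * (8 / ζ ^ 2 * E) := by
      refine (hT1.trans h7).trans (le_of_eq ?_)
      rw [hl]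
      field_simp
      norm_num
    exact le_of_mul_le_mul_left h8 hlpos
  · rw [hK]
    have h3 := hA u hu T
    have h4 : ∑ w ∈ SW, P2 w * (ent (push T.mkQ (fiber r1 u)) -
        ent (push (T ⊔ V u w).mkQ (fiber r1 u))) ≤ l * g u := by
      rw [hg, Finset.mul_sum]
      apply Finset.sum_le_sum
      intro w _
      have := mul_le_mul_of_nonneg_left (hT2 (V u w)) (hP2.1 w)
      linarith
    have h5 := mul_nonneg hapos.le hξ0
    linarith
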